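/- For integers 0 ≤ k ≤ m, the Gaussian binomial coefficient [m choose k]_q is a polynomial in q of degree k(m−k) with coefficients c_0, …, c_{k(m−k)} that are palindromic and unimodal: c_{k(m−k)−i} = c_i for all i, c_0 = c_{k(m−k)} = 1, and c_0 ≤ c_1 ≤ … ≤ c_{⌊k(m−k)/2⌋}. -/

import Mathlib

namespace GB

/-- The weight of an exponent vector. -/
noncomputable def wt : (ℕ →₀ ℕ) →+ ℕ := Finsupp.weight (fun i : ℕ => i)

/-- Exponent vectors of degree `k` in the variables `0..l`. -/
def S (k l : ℕ) : Finset (ℕ →₀ ℕ) := Finset.finsuppAntidiag (Finset.range (l + 1)) k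

lemma wt_single (i a : ℕ) : wt (Finsupp.single i a) = a * i := by
  simp [wt, Finsupp.weight_single]

lemma mem_S {k l : ℕ} {s : ℕ →₀ ℕ} :
    s ∈ S k l ↔ s.degree = k ∧ ∀ i, s i ≠ 0 → i ≤ l := by
  rw [S, Finset.mem_finsuppAntidiag']
  refine and_congr (by rfl) ?_
  simp [Finset.subset_iff, Nat.lt_succ_iff]

/-- Exponent vectors of degree `k` and weight `w`. -/
noncomputable def A (k l w : ℕ) : Finset (ℕ →₀ ℕ) := (S k l).filter (fun s => wt s = w)

lemma mem_A {k l w : ℕ} {s : ℕ →₀ ℕ} :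
    s ∈ A k l w ↔ (s.degree = k ∧ ∀ i, s i ≠ 0 → i ≤ l) ∧ wt s = w := by
  rw [A, Finset.mem_filter, mem_S]

lemma exists_split {s : ℕ →₀ ℕ} {i : ℕ} (h : s i ≠ 0) :
    ∃ s' : ℕ →₀ ℕ, s = s' + Finsupp.single i 1 := by
  refine ⟨s - Finsupp.single i 1, ?_⟩
  rw [tsub_add_cancel_of_le]
  rw [Finsupp.single_le_iff]
  omega

/-- Derivation sending `X i` to `c i * X (t i)`. -/
noncomputable def Dr (c : ℕ → ℚ) (t : ℕ → ℕ) :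
    Derivation ℚ (MvPolynomial ℕ ℚ) (MvPolynomial ℕ ℚ) :=
  MvPolynomial.mkDerivation ℚ (fun i => c i • MvPolynomial.X (t i))

lemma Dr_X (c : ℕ → ℚ) (t : ℕ → ℕ) (i : ℕ) :
    Dr c t (MvPolynomial.X i) = c i • MvPolynomial.X (t i) := by
  rw [Dr, MvPolynomial.mkDerivation_X]

lemma Dr_monomial (c : ℕ → ℚ) (t : ℕ → ℕ) (s : ℕ →₀ ℕ) :
    Dr c t (MvPolynomial.monomial s 1) = ∑ i ∈ s.support,
      MvPolynomial.monomial (s - Finsupp.single i 1 + Finsupp.single (t i) 1) ((s i : ℚ) * c i) := by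
  rw [Dr, MvPolynomial.mkDerivation_monomial, one_smul, Finsupp.sum]
  refine Finset.sum_congr rfl fun i _ => ?_
  rw [MvPolynomial.X, MvPolynomial.smul_monomial, smul_eq_mul, smul_eq_mul,
    MvPolynomial.monomial_mul, mul_one]

/-- raising -/
noncomputable def E (l : ℕ) := Dr (fun i => (l : ℚ) - i) (fun i => i + 1)
/-- lowering -/
noncomputable def F := Dr (fun i => (i : ℚ)) (fun i => i - 1)
/-- Cartan -/
noncomputable def H (l : ℕ) := Dr (fun i => 2 * (i : ℚ) - l) (fun i => i)

lemma lie_EF (l : ℕ) : ⁅E l, F⁆ = H l := by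
  apply MvPolynomial.derivation_ext
  intro i
  rw [Derivation.commutator_apply]
  simp only [E, F, H, Dr_X, Derivation.map_smul, smul_smul]
  rcases i with _ | i
  · simp
  · simp only [Nat.add_sub_cancel, ← sub_smul]
    congr 1
    push_cast
    ring

lemma lie_HF (l : ℕ) : ⁅H l, F⁆ = (-2 : ℚ) • F := by
  apply MvPolynomial.derivation_ext
  intro i
  rw [Derivation.commutator_apply]
  simp only [F, H, Dr_X, Derivation.map_smul, smul_smul, Derivation.smul_apply]
  rcases i with _ | i
  · simp
  · simp only [Nat.add_sub_cancel, ← sub_smul]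
    congr 1
    push_cast
    ring

/-- The weight space. -/
noncomputable def V (k l w : ℕ) : Submodule ℚ (MvPolynomial ℕ ℚ) :=
  MvPolynomial.restrictSupport ℚ (A k l w : Set (ℕ →₀ ℕ))

lemma V_induct {k l w : ℕ} (D : MvPolynomial ℕ ℚ →ₗ[ℚ] MvPolynomial ℕ ℚ)
    (W : Submodule ℚ (MvPolynomial ℕ ℚ))
    (h : ∀ s ∈ A k l w, D (MvPolynomial.monomial s 1) ∈ W) :
    ∀ v ∈ V k l w, D v ∈ W := by
  have : V k l w ≤ W.comap D := by
    rw [V, MvPolynomial.restrictSupport_eq_span, Submodule.span_le]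
    rintro _ ⟨s, hs, rfl⟩
    exact h s hs
  exact this

lemma E_mem {k l w : ℕ} : ∀ v ∈ V k l w, E l v ∈ V k l (w + 1) := by
  refine V_induct (E l : MvPolynomial ℕ ℚ →ₗ[ℚ] MvPolynomial ℕ ℚ) _ fun s hs => ?_
  change E l _ ∈ _
  rw [E, Dr_monomial]
  refine Submodule.sum_mem _ fun i hi => ?_
  rw [V, MvPolynomial.monomial_mem_restrictSupport]
  rw [mem_A] at hs
  obtain ⟨⟨h1, h2⟩, h3⟩ := hs
  have hi0 : s i ≠ 0 := by simpa using hi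
  have hil := h2 i hi0
  rcases hil.eq_or_lt with rfl | hil
  · right; simp
  left
  obtain ⟨s', rfl⟩ := exists_split hi0
  rw [add_tsub_cancel_right, Finset.mem_coe, mem_A]
  simp only [map_add, Finsupp.degree_single, wt_single] at h1 h3 ⊢
  refine ⟨⟨h1, fun j hj => ?_⟩, by omega⟩
  by_cases hji : j = i + 1
  · omega
  · apply h2 j
    rw [Finsupp.add_apply, Finsupp.single_apply, if_neg (Ne.symm hji)] at hj
    rw [Finsupp.add_apply]
    omega

lemma F_mem {k l w : ℕ} : ∀ v ∈ V k l (w + 1), F v ∈ V k l w := by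
  refine V_induct (F : MvPolynomial ℕ ℚ →ₗ[ℚ] MvPolynomial ℕ ℚ) _ fun s hs => ?_
  change F _ ∈ _
  rw [F, Dr_monomial]
  refine Submodule.sum_mem _ fun i hi => ?_
  rw [V, MvPolynomial.monomial_mem_restrictSupport]
  rw [mem_A] at hs
  obtain ⟨⟨h1, h2⟩, h3⟩ := hs
  have hi0 : s i ≠ 0 := by simpa using hi
  have hil := h2 i hi0
  rcases i with _ | i
  · right; simp
  left
  obtain ⟨s', rfl⟩ := exists_split hi0
  rw [add_tsub_cancel_right, Finset.mem_coe, mem_A]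
  simp only [map_add, Finsupp.degree_single, wt_single, Nat.add_sub_cancel] at h1 h3 ⊢
  refine ⟨⟨h1, fun j hj => ?_⟩, by omega⟩
  by_cases hji : j = i
  · omega
  · apply h2 j
    rw [Finsupp.add_apply, Finsupp.single_apply, if_neg (Ne.symm hji)] at hj
    rw [Finsupp.add_apply]
    omega

lemma F_zero {k l : ℕ} : ∀ v ∈ V k l 0, F v = 0 := by
  have := V_induct (k := k) (l := l) (w := 0)
    (F : MvPolynomial ℕ ℚ →ₗ[ℚ] MvPolynomial ℕ ℚ) ⊥ fun s hs => ?_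
  · exact fun v hv => (Submodule.mem_bot ℚ).1 (this v hv)
  change F _ ∈ _
  rw [F, Dr_monomial]
  refine Submodule.sum_mem _ fun i hi => ?_
  rw [mem_A] at hs
  obtain ⟨⟨h1, h2⟩, h3⟩ := hs
  have hi0 : s i ≠ 0 := by simpa using hi
  obtain ⟨s', rfl⟩ := exists_split hi0
  simp only [map_add, wt_single] at h3
  have : i = 0 := by omega
  simp [this]

lemma F_pow {k l : ℕ} : ∀ w, ∀ v ∈ V k l w, F^[w + 1] v = 0 := by
  intro w
  induction w with
  | zero => intro v hv; exact F_zero v hv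
  | succ w ih => intro v hv; rw [Function.iterate_succ_apply]; exact ih _ (F_mem v hv)

lemma H_monomial (l : ℕ) (s : ℕ →₀ ℕ) : H l (MvPolynomial.monomial s 1) =
    (2 * (wt s : ℚ) - l * (s.degree : ℚ)) • MvPolynomial.monomial s (1 : ℚ) := by
  rw [H, Dr_monomial]
  have : ∀ i ∈ s.support, MvPolynomial.monomial (s - Finsupp.single i 1 + Finsupp.single i 1)
      ((s i : ℚ) * (2 * (i : ℚ) - l)) =
      ((s i : ℚ) * (2 * (i : ℚ) - l)) • MvPolynomial.monomial s (1 : ℚ) := by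
    intro i hi
    rw [MvPolynomial.smul_monomial, smul_eq_mul, mul_one, tsub_add_cancel_of_le]
    rw [Finsupp.single_le_iff]
    have : s i ≠ 0 := by simpa using hi
    omega
  rw [Finset.sum_congr rfl this, ← Finset.sum_smul]
  congr 1
  have h1 : s.degree = ∑ i ∈ s.support, s i := rfl
  have h2 : wt s = ∑ i ∈ s.support, s i * i := by
    rw [wt, Finsupp.weight_apply, Finsupp.sum]; rfl
  rw [h1, h2]
  push_cast
  rw [Finset.mul_sum, Finset.mul_sum, ← Finset.sum_sub_distrib]
  exact Finset.sum_congr rfl fun i _ => by ring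

lemma H_V {k l w : ℕ} : ∀ v ∈ V k l w, H l v = (2 * (w : ℚ) - l * k) • v := by
  have := V_induct (k := k) (l := l) (w := w)
    ((H l : MvPolynomial ℕ ℚ →ₗ[ℚ] MvPolynomial ℕ ℚ) - (2 * (w : ℚ) - l * k) • LinearMap.id) ⊥
    fun s hs => ?_
  · intro v hv
    have h := (Submodule.mem_bot ℚ).1 (this v hv)
    exact sub_eq_zero.1 h
  rw [Submodule.mem_bot]
  change H l _ - (2 * (w : ℚ) - l * k) • _ = 0
  rw [mem_A] at hs
  rw [H_monomial, hs.1.1, hs.2, LinearMap.id_apply, sub_self]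

lemma iter_H (l : ℕ) (v : MvPolynomial ℕ ℚ) (μ : ℚ) (hH : H l v = μ • v) (j : ℕ) :
    H l (F^[j] v) = (μ - 2 * j) • F^[j] v := by
  induction j with
  | zero => simpa using hH
  | succ j ih =>
    rw [Function.iterate_succ_apply']
    have h := congrArg (fun D => D (F^[j] v)) (lie_HF l)
    simp only [Derivation.commutator_apply, Derivation.smul_apply, ih, Derivation.map_smul] at h
    rw [sub_eq_iff_eq_add] at h
    rw [h, ← add_smul]
    congr 1
    push_cast
    ring

lemma iter_E (l : ℕ) (v : MvPolynomial ℕ ℚ) (μ : ℚ) (hH : H l v = μ • v) (hE : E l v = 0)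
    (j : ℕ) : E l (F^[j + 1] v) = (((j : ℚ) + 1) * (μ - j)) • F^[j] v := by
  induction j with
  | zero =>
    have h := congrArg (fun D => D v) (lie_EF l)
    simp only [Derivation.commutator_apply, hE, hH, map_zero, sub_zero] at h
    simpa using h
  | succ j ih =>
    rw [Function.iterate_succ_apply']
    have h := congrArg (fun D => D (F^[j + 1] v)) (lie_EF l)
    simp only [Derivation.commutator_apply, ih, Derivation.map_smul, iter_H l v μ hH] at h
    rw [sub_eq_iff_eq_add, ← Function.iterate_succ_apply' (⇑F) j v] at h
    rw [h, ← add_smul]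
    congr 1
    push_cast
    ring

lemma E_inj {k l w : ℕ} (hw : 2 * w < k * l) (v : MvPolynomial ℕ ℚ) (hv : v ∈ V k l w)
    (hE : E l v = 0) : v = 0 := by
  have key : ∀ j, F^[j] v = 0 → v = 0 := by
    intro j
    induction j with
    | zero => exact id
    | succ j ih =>
      intro h
      apply ih
      have h2 := iter_E l v _ (H_V v hv) hE j
      rw [h, map_zero] at h2
      rcases smul_eq_zero.1 h2.symm with h3 | h3
      · exfalso
        have h4 : (2 * (w : ℚ)) < k * l := by exact_mod_cast hw
        have h5 : (0 : ℚ) ≤ j := Nat.cast_nonneg j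
        rcases mul_eq_zero.1 h3 with h3 | h3 <;> nlinarith
      · exact h3
  exact key _ (F_pow w v hv)

lemma card_le {k l w : ℕ} (hw : 2 * w < k * l) : (A k l w).card ≤ (A k l (w + 1)).card := by
  have fr : ∀ w, Module.finrank ℚ (V k l w) = (A k l w).card := by
    intro w
    rw [V, Module.finrank_eq_nat_card_basis (MvPolynomial.basisRestrictSupport ℚ _)]
    simp
  have : Module.Finite ℚ (V k l (w + 1)) :=
    Module.Finite.of_basis (MvPolynomial.basisRestrictSupport ℚ (A k l (w + 1) : Set (ℕ →₀ ℕ)))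
  rw [← fr, ← fr]
  apply LinearMap.finrank_le_finrank_of_injective
    (f := (E l : MvPolynomial ℕ ℚ →ₗ[ℚ] MvPolynomial ℕ ℚ).restrict (E_mem (k := k) (l := l) (w := w)))
  rw [injective_iff_map_eq_zero]
  intro v hv
  apply Subtype.ext
  exact E_inj hw v.1 v.2 (congrArg Subtype.val hv)

open Polynomial in
/-- Generating polynomial. -/
noncomputable def G (k l : ℕ) : ℚ[X] := ∑ s ∈ S k l, X ^ wt s

lemma G_coeff (k l w : ℕ) : (G k l).coeff w = ((A k l w).card : ℚ) := by
  simp only [G, Polynomial.finsetSum_coeff, Polynomial.coeff_X_pow, A, Finset.card_filter]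
  push_cast
  exact Finset.sum_congr rfl fun s _ => by simp [eq_comm]

lemma G_zero_left (l : ℕ) : G 0 l = 1 := by
  have : S 0 l = {0} := by
    ext s
    rw [mem_S, Finset.mem_singleton, Finsupp.degree_eq_zero_iff]
    constructor
    · exact fun h => h.1
    · rintro rfl; simp
  rw [G, this]; simp

lemma G_zero_right (k : ℕ) : G k 0 = 1 := by
  have : S k 0 = {Finsupp.single 0 k} := by
    ext s
    rw [mem_S, Finset.mem_singleton]
    constructor
    · rintro ⟨h1, h2⟩
      have h3 : s = Finsupp.single 0 (s 0) := by
        ext i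
        rcases i with _ | i
        · simp
        · have := h2 (i + 1)
          simp
          omega
      rw [h3, Finsupp.degree_single] at h1
      rw [h3, h1]
    · rintro rfl
      refine ⟨by simp, fun i hi => ?_⟩
      by_contra h
      apply hi
      rw [Finsupp.single_apply, if_neg (by omega)]
  rw [G, this]; simp [wt_single]

lemma S_succ (k l : ℕ) : S (k + 1) (l + 1) =
    S (k + 1) l ∪ (S k (l + 1)).image (fun s => s + Finsupp.single (l + 1) 1) := by
  ext s
  simp only [Finset.mem_union, Finset.mem_image, mem_S]
  constructor
  · rintro ⟨h1, h2⟩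
    by_cases h : s (l + 1) = 0
    · left
      refine ⟨h1, fun i hi => ?_⟩
      have := h2 i hi
      have : i ≠ l + 1 := by rintro rfl; exact hi h
      omega
    · right
      obtain ⟨s', rfl⟩ := exists_split h
      simp only [map_add, Finsupp.degree_single] at h1
      refine ⟨s', ⟨by omega, fun i hi => h2 i ?_⟩, rfl⟩
      rw [Finsupp.add_apply]; omega
  · rintro (⟨h1, h2⟩ | ⟨s, ⟨h1, h2⟩, rfl⟩)
    · exact ⟨h1, fun i hi => (h2 i hi).trans (by omega)⟩
    · refine ⟨by simp [h1], fun i hi => ?_⟩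
      by_cases h : i = l + 1
      · omega
      · apply h2
        rwa [Finsupp.add_apply, Finsupp.single_apply, if_neg (Ne.symm h), add_zero] at hi

open Polynomial in
lemma G_succ (k l : ℕ) : G (k + 1) (l + 1) = G (k + 1) l + X ^ (l + 1) * G k (l + 1) := by
  rw [G, S_succ, Finset.sum_union, Finset.sum_image, G, G, Finset.mul_sum]
  · congr 1
    refine Finset.sum_congr rfl fun s _ => ?_
    rw [map_add, wt_single, pow_add, one_mul, mul_comm]
  · intro a _ b _ h
    exact add_right_cancel h
  · rw [Finset.disjoint_left]
    intro s hs h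
    obtain ⟨s', _, rfl⟩ := Finset.mem_image.1 h
    have := (mem_S.1 hs).2 (l + 1) (by simp)
    omega

open Polynomial in
/-- Numerator product. -/
noncomputable def P (k l : ℕ) : ℚ[X] := ∏ i ∈ Finset.range k, (1 - X ^ (l + i + 1))

open Polynomial in
lemma G_mul (k l : ℕ) : G k l * P k 0 = P k l := by
  have pr : ∀ k l, P (k + 1) l = P k l * (1 - X ^ (l + k + 1)) :=
    fun k l => Finset.prod_range_succ _ _
  have pl : ∀ k l, P (k + 1) l = (1 - X ^ (l + 1)) * P k (l + 1) := by
    intro k l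
    rw [P, Finset.prod_range_succ', mul_comm, P]
    congr 1
    exact Finset.prod_congr rfl fun i _ => by ring
  induction l generalizing k with
  | zero => rw [G_zero_right, one_mul]
  | succ l ihl =>
    induction k with
    | zero => rw [G_zero_left, one_mul]; simp [P]
    | succ k ihk =>
      rw [G_succ, add_mul, ihl, pl k l, pr k 0, pr k (l + 1), ← ihk]
      ring

open Polynomial in
lemma rev_factor (n : ℕ) : (1 - X ^ (n + 1) : ℚ[X]).reverse = - (1 - X ^ (n + 1)) := by
  have hd : (X ^ (n + 1) - C (1 : ℚ)).natDegree = n + 1 := natDegree_X_pow_sub_C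
  have : (1 - X ^ (n + 1) : ℚ[X]) = -(X ^ (n + 1) - C 1) := by simp
  rw [this, reverse_neg, reverse, hd, reflect_sub, reflect_monomial,
    reflect_C, revAt_le le_rfl]
  simp

open Polynomial in
lemma P_facts (k l : ℕ) : (P k l).reverse = (-1) ^ k * P k l ∧ P k l ≠ 0 ∧
    (P k l).coeff 0 = 1 ∧ (P k l).natDegree = ∑ i ∈ Finset.range k, (l + i + 1) := by
  induction k with
  | zero =>
    have h : (1 : ℚ[X]).reverse = 1 := by rw [← C_1, reverse_C]
    simp [P, h]
  | succ k ih =>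
    obtain ⟨h1, h2, h3, h4⟩ := ih
    have pr : P (k + 1) l = P k l * (1 - X ^ (l + k + 1)) := Finset.prod_range_succ _ _
    have hd : (1 - X ^ (l + k + 1) : ℚ[X]).natDegree = l + k + 1 := by
      rw [← neg_sub, natDegree_neg, ← C_1, natDegree_X_pow_sub_C]
    have hne : (1 - X ^ (l + k + 1) : ℚ[X]) ≠ 0 := by
      intro h; rw [h, natDegree_zero] at hd; omega
    refine ⟨?_, ?_, ?_, ?_⟩
    · rw [pr, reverse_mul_of_domain, h1, rev_factor]; ring
    · rw [pr]; exact mul_ne_zero h2 hne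
    · rw [pr, mul_coeff_zero, h3]; simp
    · rw [pr, natDegree_mul h2 hne, h4, hd, Finset.sum_range_succ]

end GB

/-- For integers `0 ≤ k ≤ m`, the Gaussian binomial coefficient `[m choose k]_q`
(the polynomial `g` whose image in `ℚ(q)` is `∏_{i=1}^{k} (1−q^{m−k+i})/(1−q^i)`)
is a polynomial in `q` of degree `k(m−k)` whose coefficients `c_0, …, c_{k(m−k)}`
are palindromic and unimodal: `c_{k(m−k)−i} = c_i` for all `i`,
`c_0 = c_{k(m−k)} = 1`, and `c_0 ≤ c_1 ≤ … ≤ c_{⌊k(m−k)/2⌋}`. -/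
theorem gaussian_binomial_palindromic_unimodal (m k : ℕ) (hk : k ≤ m)
    (g : Polynomial ℚ)
    (hg : algebraMap (Polynomial ℚ) (RatFunc ℚ) g =
      ∏ i ∈ Finset.range k,
        (1 - RatFunc.X ^ (m - k + i + 1)) / (1 - RatFunc.X ^ (i + 1))) :
    g.natDegree = k * (m - k) ∧
    (∀ i ≤ k * (m - k), g.coeff (k * (m - k) - i) = g.coeff i) ∧
    g.coeff 0 = 1 ∧ g.coeff (k * (m - k)) = 1 ∧
    (∀ i j : ℕ, i ≤ j → j ≤ k * (m - k) / 2 → g.coeff i ≤ g.coeff j) := by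
  obtain ⟨l, hl⟩ : ∃ l, m - k = l := ⟨_, rfl⟩
  rw [hl] at hg ⊢
  have hP : ∀ l, algebraMap (Polynomial ℚ) (RatFunc ℚ) (GB.P k l) =
      ∏ i ∈ Finset.range k, (1 - RatFunc.X ^ (l + i + 1)) := by
    intro l
    simp [GB.P, map_prod, RatFunc.algebraMap_X]
  obtain ⟨a1, a2, a3, a4⟩ := GB.P_facts k 0
  obtain ⟨b1, b2, b3, b4⟩ := GB.P_facts k l
  have hmul : g * GB.P k 0 = GB.P k l := by
    apply RatFunc.algebraMap_injective ℚ
    have h0 : algebraMap (Polynomial ℚ) (RatFunc ℚ) (GB.P k 0) ≠ 0 := by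
      simpa using a2
    rw [map_mul, hg, Finset.prod_div_distrib, hP l]
    have h1 := hP 0
    simp only [zero_add] at h1
    rw [← h1, div_mul_cancel₀ _ h0]
  have hgG : g = GB.G k l := mul_right_cancel₀ a2 (hmul.trans (GB.G_mul k l).symm)
  have g0 : g ≠ 0 := by
    rintro rfl
    rw [zero_mul] at hmul
    exact b2 hmul.symm
  have hdeg : g.natDegree = k * l := by
    have h := congrArg Polynomial.natDegree hmul
    rw [Polynomial.natDegree_mul g0 a2, a4, b4] at h
    have : ∑ i ∈ Finset.range k, (l + i + 1) = k * l + ∑ i ∈ Finset.range k, (0 + i + 1) := by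
      simp only [add_assoc, Finset.sum_add_distrib]
      simp
    omega
  have hrev : g.reverse = g := by
    have h := congrArg Polynomial.reverse hmul
    rw [Polynomial.reverse_mul_of_domain, a1, b1, ← hmul] at h
    apply mul_right_cancel₀ a2
    have hs : ((-1 : Polynomial ℚ) ^ k) ≠ 0 := by simp
    apply mul_left_cancel₀ hs
    rw [← h]; ring
  have hpal : ∀ i ≤ k * l, g.coeff (k * l - i) = g.coeff i := by
    intro i hi
    have h := Polynomial.coeff_reverse g i
    rw [hrev, hdeg, Polynomial.revAt_le hi] at h
    exact h.symm
  have hc0 : g.coeff 0 = 1 := by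
    have h := congrArg (fun p => Polynomial.coeff p 0) hmul
    simp only [Polynomial.mul_coeff_zero, a3, b3, mul_one] at h
    exact h
  refine ⟨hdeg, hpal, hc0, ?_, ?_⟩
  · rw [← hc0]; exact hpal 0 (Nat.zero_le _)
  · intro i j hij
    induction j, hij using Nat.le_induction with
    | base => intro _; exact le_rfl
    | succ j hj ih =>
      intro h
      refine (ih (by omega)).trans ?_
      rw [hgG, GB.G_coeff, GB.G_coeff]
      exact_mod_cast GB.card_le (by omega)
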